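/- Let r ∈ (0,2) and m ∈ ℕ, m ≥ 1. For each N ∈ ℕ define y^{(N)}_{i₁…i_m} = N^{−m/2} for all 1 ≤ i₁, …, i_m ≤ N. Then lim_{N→∞} (∫_{[0,1]^m} |∑_{i₁,…,i_m=1}^{N} r_{i₁}(t₁)···r_{i_m}(t_m) y^{(N)}_{i₁…i_m}|^{r} dt₁···dt_m)^{1/r} = (√2 · (Γ((r+1)/2)/√π)^{1/r})^m. -/

import Mathlib

open MeasureTheory Real Filter

/-- The `j`-th Rademacher function, `r_j(t) = sgn(sin(2^j π t))`. -/
noncomputable def rademacher (j : ℕ) (t : ℝ) : ℝ :=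
  Real.sign (Real.sin ((2 : ℝ) ^ j * Real.pi * t))

/-- `p₀ ∈ (1,2)` is the unique solution of `Γ((p₀+1)/2) = √π / 2`. -/
noncomputable def khintchineP0 : ℝ :=
  sInf {p : ℝ | 1 < p ∧ p < 2 ∧ Real.Gamma ((p + 1) / 2) = Real.sqrt Real.pi / 2}

/-- The optimal constant `A_r` in the Khintchine inequality. -/
noncomputable def khintchineA (r : ℝ) : ℝ :=
  if r ≤ khintchineP0 then (2 : ℝ) ^ (1 / r - 1 / 2)
  else if r < 2 then
    (1 / Real.sqrt 2) * (Real.Gamma ((r + 1) / 2) / Real.sqrt Real.pi) ^ (-(1 / r))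
  else 1

/-- The `ℓ_p` norm of a vector in `ℝⁿ` (for finite `p`). -/
noncomputable def lpNorm (p : ℝ) {n : ℕ} (x : Fin n → ℝ) : ℝ :=
  (∑ i, |x i| ^ p) ^ (1 / p)

/-- The `ℓ_∞` norm of a vector in `ℝⁿ`. -/
noncomputable def linfNorm {n : ℕ} (x : Fin n → ℝ) : ℝ :=
  ⨆ i, |x i|

/-!
The array `y^{(N)}` and the cube `[0,1]^m` are both product objects, so the multiple sum factorises
and the integral is the `m`-th power of a one-dimensional one. On `[0,1]` the Rademacher functions
are independent symmetric signs, because each half of the interval, rescaled to `[0,1]`, carries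
`r_{j+1}` to `r_j` while `r_1` is constant on it. The normalized sums therefore converge in
distribution to a standard Gaussian; being sub-Gaussian with a fixed parameter they have bounded
moments of every order, which upgrades this to convergence of the `r`-th absolute moment to that of
the Gaussian.
-/

open ProbabilityTheory Topology
open scoped NNReal

section MomentConvergence

lemma abs_sub_clamp_le {K q : ℝ} (hK : 0 < K) (hq : 1 ≤ q) (x : ℝ) :
    |x - max (-K) (min K x)| ≤ K ^ (1 - q) * |x| ^ q := by
  rcases le_total |x| K with hx | hx
  · rw [min_eq_right (abs_le.1 hx).2, max_eq_right (abs_le.1 hx).1, sub_self, abs_zero]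
    positivity
  · have hx0 : 0 < |x| := hK.trans_le hx
    calc |x - max (-K) (min K x)| ≤ |x| := by grind
      _ = |x| ^ (1 - q) * |x| ^ q := by rw [← rpow_add hx0, sub_add_cancel, rpow_one]
      _ ≤ K ^ (1 - q) * |x| ^ q := by
        gcongr ?_ * _
        exact rpow_le_rpow_of_nonpos hK hx (sub_nonpos.2 hq)

lemma integrable_of_integrable_abs_rpow {Ω : Type*} {mΩ : MeasurableSpace Ω} {μ : Measure Ω}
    [IsFiniteMeasure μ] {X : Ω → ℝ} {q : ℝ} (hX : AEMeasurable X μ) (hq : 1 ≤ q)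
    (hint : Integrable (fun ω => |X ω| ^ q) μ) : Integrable X μ := by
  have hq0 : 0 < q := one_pos.trans_le hq
  have hmem : MemLp X (ENNReal.ofReal q) μ :=
    (integrable_norm_rpow_iff hX.aestronglyMeasurable (by simpa using hq0) (by simp)).1 <| by
      simpa [ENNReal.toReal_ofReal hq0.le] using hint
  exact hmem.integrable (by simpa using hq)

lemma abs_integral_sub_integral_clamp_le {Ω : Type*} {mΩ : MeasurableSpace Ω} {μ : Measure Ω}
    [IsFiniteMeasure μ] {X : Ω → ℝ} {K q : ℝ} (hX : AEMeasurable X μ) (hK : 0 < K) (hq : 1 ≤ q)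
    (hint : Integrable (fun ω => |X ω| ^ q) μ) :
    |∫ ω, X ω ∂μ - ∫ ω, max (-K) (min K (X ω)) ∂μ| ≤ K ^ (1 - q) * ∫ ω, |X ω| ^ q ∂μ := by
  have hXint := integrable_of_integrable_abs_rpow hX hq hint
  have hclamp : Integrable (fun ω => max (-K) (min K (X ω))) μ :=
    (integrable_const _).sup ((integrable_const _).inf hXint)
  rw [← integral_sub hXint hclamp, ← integral_const_mul, ← norm_eq_abs]
  refine norm_integral_le_of_norm_le (hint.const_mul _) (Eventually.of_forall fun ω => ?_)
  exact abs_sub_clamp_le hK hq (X ω)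

open BoundedContinuousFunction in
lemma tendsto_integral_of_tendstoInDistribution {ι E : Type*} [TopologicalSpace E]
    [MeasurableSpace E] [OpensMeasurableSpace E] {Ω : ι → Type*} {Ω' : Type*}
    {mΩ : ∀ i, MeasurableSpace (Ω i)} {mΩ' : MeasurableSpace Ω'} {μ : ∀ i, Measure (Ω i)}
    [∀ i, IsProbabilityMeasure (μ i)] {μ' : Measure Ω'} [IsProbabilityMeasure μ'] {l : Filter ι}
    {X : ∀ i, Ω i → E} {Z : Ω' → E}
    (h : TendstoInDistribution X l Z μ μ') (f : E →ᵇ ℝ) :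
    Tendsto (fun i => ∫ ω, f (X i ω) ∂μ i) l (𝓝 (∫ ω, f (Z ω) ∂μ')) := by
  have hlim := ProbabilityMeasure.tendsto_iff_forall_integral_tendsto.1 h.tendsto f
  simp only [ProbabilityMeasure.coe_mk] at hlim
  rw [integral_map h.aemeasurable_limit f.continuous.measurable.aestronglyMeasurable] at hlim
  exact hlim.congr fun i =>
    integral_map (h.forall_aemeasurable i) f.continuous.measurable.aestronglyMeasurable

variable {Ω : ℕ → Type*} {Ω' : Type*} {mΩ : ∀ n, MeasurableSpace (Ω n)} {mΩ' : MeasurableSpace Ω'}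
  {μ : ∀ n, Measure (Ω n)} [∀ n, IsProbabilityMeasure (μ n)]
  {μ' : Measure Ω'} [IsProbabilityMeasure μ']

lemma integrable_and_integral_le_of_tendstoInDistribution {E : Type*} [TopologicalSpace E]
    [MeasurableSpace E] [OpensMeasurableSpace E] [HasOuterApproxClosed E]
    {X : ∀ n, Ω n → E} {Z : Ω' → E} {g : E → ℝ} {C : ℝ}
    (h : TendstoInDistribution X atTop Z μ μ') (hg : Continuous g) (hg0 : 0 ≤ g)
    (hint : ∀ n, Integrable (fun ω => g (X n ω)) (μ n)) (hC : ∀ n, ∫ ω, g (X n ω) ∂μ n ≤ C) :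
    Integrable (fun ω => g (Z ω)) μ' ∧ ∫ ω, g (Z ω) ∂μ' ≤ C := by
  have hC0 : 0 ≤ C := (integral_nonneg fun ω => hg0 (X 0 ω)).trans (hC 0)
  have hgZ : AEStronglyMeasurable (fun ω => g (Z ω)) μ' :=
    (hg.measurable.comp_aemeasurable h.aemeasurable_limit).aestronglyMeasurable
  have hfatou : ∫⁻ ω, ENNReal.ofReal (g (Z ω)) ∂μ' ≤ ENNReal.ofReal C := by
    have hliminf := lintegral_le_liminf_lintegral_of_forall_isOpen_measure_le_liminf_measure
      hg hg0 fun _ hG => ProbabilityMeasure.le_liminf_measure_open_of_tendsto h.tendsto hG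
    simp only [ProbabilityMeasure.coe_mk] at hliminf
    rw [lintegral_map' (by fun_prop) h.aemeasurable_limit] at hliminf
    refine hliminf.trans (liminf_le_of_le (by isBoundedDefault) fun b hb => ?_)
    obtain ⟨n, hn⟩ := hb.exists
    rw [lintegral_map' (by fun_prop) (h.forall_aemeasurable n),
      ← ofReal_integral_eq_lintegral_ofReal (hint n) (Eventually.of_forall fun _ => hg0 _)] at hn
    exact hn.trans (ENNReal.ofReal_le_ofReal (hC n))
  have hgZint : Integrable (fun ω => g (Z ω)) μ' :=
    (lintegral_ofReal_ne_top_iff_integrable hgZ (Eventually.of_forall fun _ => hg0 _)).1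
      (hfatou.trans_lt ENNReal.ofReal_lt_top).ne
  refine ⟨hgZint, ?_⟩
  rwa [← ofReal_integral_eq_lintegral_ofReal hgZint (Eventually.of_forall fun _ => hg0 _),
    ENNReal.ofReal_le_ofReal_iff hC0] at hfatou

open BoundedContinuousFunction in
theorem tendsto_integral_of_tendstoInDistribution_of_integral_abs_rpow_le
    {X : ∀ n, Ω n → ℝ} {Z : Ω' → ℝ} {q C : ℝ}
    (h : TendstoInDistribution X atTop Z μ μ') (hq : 1 < q)
    (hint : ∀ n, Integrable (fun ω => |X n ω| ^ q) (μ n)) (hC : ∀ n, ∫ ω, |X n ω| ^ q ∂μ n ≤ C) :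
    Tendsto (fun n => ∫ ω, X n ω ∂μ n) atTop (𝓝 (∫ ω, Z ω ∂μ')) := by
  obtain ⟨hZint, hZC⟩ := integrable_and_integral_le_of_tendstoInDistribution h
    (continuous_abs.rpow_const fun _ => Or.inr (by positivity)) (fun x => by positivity) hint hC
  have hbound_lim : Tendsto (fun K : ℝ => K ^ (1 - q) * C) atTop (𝓝 0) := by
    simpa using (tendsto_rpow_neg_atTop (sub_pos.2 hq)).mul_const C
  have huniform : TendstoUniformly (fun K n => ∫ ω, max (-K) (min K (X n ω)) ∂μ n)
      (fun n => ∫ ω, X n ω ∂μ n) atTop := by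
    rw [Metric.tendstoUniformly_iff]
    intro ε hε
    filter_upwards [hbound_lim.eventually_lt_const hε, eventually_gt_atTop 0] with K hKε hK n
    refine ((abs_integral_sub_integral_clamp_le (h.forall_aemeasurable n) hK hq.le
      (hint n)).trans ?_).trans_lt hKε
    gcongr
    exact hC n
  refine huniform.tendsto_of_eventually_tendsto
    (L := fun K => ∫ ω, max (-K) (min K (Z ω)) ∂μ') ?_ ?_
  · filter_upwards [eventually_ge_atTop 0] with K hK
    exact tendsto_integral_of_tendstoInDistribution h
      (ofNormedAddCommGroup (fun x => max (-K) (min K x)) (by fun_prop) K (by grind [norm_eq_abs]))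
  · refine tendsto_iff_dist_tendsto_zero.2 (squeeze_zero' (.of_forall fun _ => dist_nonneg) ?_
      hbound_lim)
    filter_upwards [eventually_gt_atTop 0] with K hK
    rw [dist_comm]
    refine (abs_integral_sub_integral_clamp_le h.aemeasurable_limit hK hq.le hZint).trans ?_
    gcongr

end MomentConvergence

lemma integral_abs_rpow_gaussianReal {r : ℝ} {v : ℝ≥0} (hr : -1 < r) (hv : v ≠ 0) :
    ∫ x, |x| ^ r ∂(gaussianReal 0 v) = (2 * v) ^ (r / 2) * (Gamma ((r + 1) / 2) / √π) := by
  have hpow : (2 * v : ℝ)⁻¹ ^ (-(r + 1) / 2) = (2 * v) ^ (r / 2) * √(2 * v) := by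
    rw [inv_rpow (by positivity), ← rpow_neg (by positivity), sqrt_eq_rpow,
      ← rpow_add (by positivity)]
    congr 1
    ring
  calc ∫ x, |x| ^ r ∂(gaussianReal 0 v)
      = ∫ x, (√(2 * π * v))⁻¹ * (|x| ^ r * exp (-(2 * v : ℝ)⁻¹ * |x| ^ (2 : ℝ))) := by
        rw [integral_gaussianReal_eq_integral_smul hv]
        congr with x
        rw [gaussianPDFReal, smul_eq_mul, sub_zero, rpow_two, sq_abs, neg_div, div_eq_inv_mul,
          neg_mul]
        ring
    _ = (√(2 * π * v))⁻¹ * ((2 * v : ℝ)⁻¹ ^ (-(r + 1) / 2) * Gamma ((r + 1) / 2)) := by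
        rw [integral_const_mul,
          integral_comp_abs (f := fun y => y ^ r * exp (-(2 * v : ℝ)⁻¹ * y ^ (2 : ℝ))),
          integral_rpow_mul_exp_neg_mul_rpow two_pos hr (by positivity)]
        ring
    _ = (2 * v) ^ (r / 2) * (Gamma ((r + 1) / 2) / √π) := by
        rw [hpow, mul_right_comm, sqrt_mul (by positivity) π]
        field_simp

section Subgaussian

variable {Ω : Type*} {mΩ : MeasurableSpace Ω} {P : Measure Ω}

lemma integrable_abs_rpow_of_hasSubgaussianMGF {X : Ω → ℝ} {c : ℝ≥0} {p : ℝ}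
    (h : HasSubgaussianMGF X c P) (hp : 0 ≤ p) : Integrable (fun ω => |X ω| ^ p) P := by
  lift p to ℝ≥0 using hp
  rcases eq_or_ne p 0 with rfl | hp0
  · simpa using h.integrable_exp_mul 0
  · simpa using (h.memLp p).integrable_norm_rpow (by simpa using hp0) (by simp)

lemma integral_abs_rpow_le_of_hasSubgaussianMGF {X : Ω → ℝ} {c : ℝ≥0} {p : ℝ}
    (h : HasSubgaussianMGF X c P) (hp : 0 ≤ p) :
    ∫ ω, |X ω| ^ p ∂P ≤ p ^ p * (2 * exp (c / 2)) := by
  have hexp : Integrable (fun ω => exp (1 * X ω) + exp (-1 * X ω)) P :=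
    (h.integrable_exp_mul 1).add (h.integrable_exp_mul (-1))
  calc ∫ ω, |X ω| ^ p ∂P ≤ ∫ ω, p ^ p * (exp (1 * X ω) + exp (-1 * X ω)) ∂P := by
        refine integral_mono_of_nonneg (Eventually.of_forall fun ω => by positivity)
          (hexp.const_mul _) (Eventually.of_forall fun ω => ?_)
        refine (rpow_abs_le_mul_max_exp (X ω) hp one_ne_zero).trans ?_
        simp only [abs_one, div_one]
        gcongr
        exact max_le_add_of_nonneg (exp_pos _).le (exp_pos _).le
    _ = p ^ p * (mgf X P 1 + mgf X P (-1)) := by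
        rw [integral_const_mul, integral_add (h.integrable_exp_mul 1) (h.integrable_exp_mul (-1)),
          mgf, mgf]
    _ ≤ p ^ p * (2 * exp (c / 2)) := by
        gcongr
        simpa [two_mul] using add_le_add (h.mgf_le 1) (h.mgf_le (-1))

variable {X : ℕ → Ω → ℝ} {c : ℝ≥0}

lemma hasSubgaussianMGF_inv_sqrt_mul_sum (hindep : iIndepFun X P)
    (hsub : ∀ k, HasSubgaussianMGF (X k) c P) (n : ℕ) :
    HasSubgaussianMGF (fun ω => (√n)⁻¹ * ∑ k ∈ Finset.range n, X k ω) c P := by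
  have h := (HasSubgaussianMGF.sum_of_iIndepFun hindep (s := Finset.range n)
    fun k _ => hsub k).const_mul (√n)⁻¹
  refine ⟨h.integrable_exp_mul, fun t => (h.mgf_le t).trans ?_⟩
  have hscale : ((√n)⁻¹ ^ 2 : ℝ) * (n * c) ≤ c := by
    rw [inv_pow, sq_sqrt n.cast_nonneg, ← mul_assoc]
    exact mul_le_of_le_one_left c.2 inv_mul_le_one
  gcongr
  rw [Finset.sum_const, Finset.card_range, nsmul_eq_mul]
  exact hscale

theorem tendsto_integral_abs_rpow_inv_sqrt_mul_sum [IsProbabilityMeasure P] {r : ℝ} (hr : 0 ≤ r)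
    (h0 : P[X 0] = 0) (h1 : P[X 0 ^ 2] = 1) (hindep : iIndepFun X P)
    (hident : ∀ k, IdentDistrib (X k) (X 0) P P) (hsub : HasSubgaussianMGF (X 0) c P) :
    Tendsto (fun n : ℕ => ∫ ω, |(√n)⁻¹ * ∑ k ∈ Finset.range n, X k ω| ^ r ∂P) atTop
      (𝓝 (∫ x, |x| ^ r ∂(gaussianReal 0 1))) := by
  have hclt := tendstoInDistribution_inv_sqrt_mul_sum (P' := gaussianReal 0 1) (Y := id)
    ⟨by fun_prop, by simp⟩ h0 h1 hindep hident
  have hmean := hasSubgaussianMGF_inv_sqrt_mul_sum hindep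
    fun k => hsub.congr_identDistrib (hident k).symm
  have hsq (x : ℝ) : |(|x| ^ r)| ^ (2 : ℝ) = |x| ^ (r * 2) := by
    rw [abs_of_nonneg (by positivity), rpow_mul (abs_nonneg x)]
  refine tendsto_integral_of_tendstoInDistribution_of_integral_abs_rpow_le
    (hclt.continuous_comp (continuous_abs.rpow_const fun _ => Or.inr hr)) one_lt_two
    (C := (r * 2) ^ (r * 2) * (2 * exp (c / 2))) (fun n => ?_) (fun n => ?_)
  · simpa only [Function.comp_apply, hsq] using
      integrable_abs_rpow_of_hasSubgaussianMGF (hmean n) (by positivity)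
  · simpa only [Function.comp_apply, hsq] using
      integral_abs_rpow_le_of_hasSubgaussianMGF (hmean n) (by positivity)

end Subgaussian

section Rademacher

lemma rademacher_eq (j : ℕ) (t : ℝ) :
    rademacher j t = -1 ∨ rademacher j t = 0 ∨ rademacher j t = 1 :=
  Real.sign_apply_eq _

lemma measurable_rademacher (j : ℕ) : Measurable (rademacher j) := by
  have hsign : Measurable Real.sign :=
    .ite measurableSet_Iio measurable_const (.ite measurableSet_Ioi measurable_const
      measurable_const)
  exact hsign.comp (by fun_prop)

lemma measurableSet_preimage_rademacher (j : ℕ) (s : Set ℝ) :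
    MeasurableSet (rademacher j ⁻¹' s) := by
  have hinter : rademacher j ⁻¹' s = rademacher j ⁻¹' (s ∩ {-1, 0, 1}) := by
    ext t
    simp [rademacher_eq]
  rw [hinter]
  exact measurable_rademacher j (Set.toFinite _).measurableSet

lemma rademacher_succ_half (j : ℕ) (s : ℝ) : rademacher (j + 1) (s / 2) = rademacher j s := by
  unfold rademacher
  congr 2
  ring

lemma rademacher_succ_add_one (j : ℕ) (s : ℝ) :
    rademacher (j + 1) (s + 1) = rademacher (j + 1) s := by
  unfold rademacher
  rw [← Real.sin_add_nat_mul_two_pi ((2 : ℝ) ^ (j + 1) * Real.pi * s) (2 ^ j)]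
  congr 2
  push_cast
  ring

lemma rademacher_one_half {s : ℝ} (hs : s ∈ Set.Ioo 0 1) : rademacher 1 (s / 2) = 1 := by
  refine Real.sign_of_pos ?_
  rw [show (2 : ℝ) ^ 1 * Real.pi * (s / 2) = s * π by ring]
  exact sin_pos_of_pos_of_lt_pi (mul_pos hs.1 pi_pos) (mul_lt_of_lt_one_left pi_pos hs.2)

lemma rademacher_one_add_one_half {s : ℝ} (hs : s ∈ Set.Ioo 0 1) :
    rademacher 1 ((s + 1) / 2) = -1 := by
  refine Real.sign_of_neg ?_
  rw [show (2 : ℝ) ^ 1 * Real.pi * ((s + 1) / 2) = s * π + π by ring, sin_add_pi, neg_lt_zero]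
  exact sin_pos_of_pos_of_lt_pi (mul_pos hs.1 pi_pos) (mul_lt_of_lt_one_left pi_pos hs.2)

lemma integrable_prod_comp_rademacher {μ : Measure ℝ} [IsFiniteMeasure μ] (S : Finset ℕ)
    (g : ℕ → ℝ → ℝ) : Integrable (fun t => ∏ j ∈ S, g j (rademacher (j + 1) t)) μ := by
  have hmeas (j : ℕ) : Measurable fun t => g j (rademacher (j + 1) t) :=
    fun s _ => measurableSet_preimage_rademacher (j + 1) (g j ⁻¹' s)
  refine .of_bound (Finset.measurable_fun_prod _ fun j _ => hmeas j).aestronglyMeasurable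
    (∏ j ∈ S, (|g j (-1)| + |g j 0| + |g j 1|)) (.of_forall fun t => ?_)
  rw [norm_eq_abs, Finset.abs_prod]
  gcongr with j
  rcases rademacher_eq (j + 1) t with h | h | h <;> rw [h] <;>
    linarith [abs_nonneg (g j (-1)), abs_nonneg (g j 0), abs_nonneg (g j 1)]

/-- Lebesgue measure on the unit interval, as a measure on `ℝ`: the probability space on which the
Rademacher functions are random variables. -/
noncomputable def unitVolume : Measure ℝ := volume.restrict (Set.Icc 0 1)

instance : IsProbabilityMeasure unitVolume := ⟨by simp [unitVolume]⟩

lemma ae_unitVolume_mem_Ioo : ∀ᵐ t ∂unitVolume, t ∈ Set.Ioo (0 : ℝ) 1 := by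
  rw [unitVolume, ← restrict_Ioo_eq_restrict_Icc]
  exact ae_restrict_mem measurableSet_Ioo

lemma integral_unitVolume {E : Type*} [NormedAddCommGroup E] [NormedSpace ℝ E] (f : ℝ → E) :
    ∫ t, f t ∂unitVolume = ∫ t in (0 : ℝ)..1, f t := by
  rw [unitVolume, integral_Icc_eq_integral_Ioc, intervalIntegral.integral_of_le zero_le_one]

lemma integral_unitVolume_eq_add_halves {E : Type*} [NormedAddCommGroup E] [NormedSpace ℝ E]
    {f : ℝ → E} (hf : Integrable f unitVolume) :
    ∫ t, f t ∂unitVolume = (2⁻¹ : ℝ) •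
      (∫ s, f (s / 2) ∂unitVolume + ∫ s, f ((s + 1) / 2) ∂unitVolume) := by
  have hint : IntervalIntegrable f volume 0 1 :=
    (intervalIntegrable_iff_integrableOn_Icc_of_le zero_le_one).2 hf
  have hmid : (1 / 2 : ℝ) ∈ Set.uIcc 0 1 := by norm_num [Set.mem_uIcc]
  simp only [integral_unitVolume]
  rw [← intervalIntegral.integral_add_adjacent_intervals
      (hint.mono_set (Set.uIcc_subset_uIcc_left hmid))
      (hint.mono_set (Set.uIcc_subset_uIcc_right hmid)),
    intervalIntegral.integral_comp_add_right (fun t => f (t / 2)),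
    intervalIntegral.integral_comp_div _ two_ne_zero,
    intervalIntegral.integral_comp_div _ two_ne_zero, ← smul_add, smul_smul]
  norm_num

lemma integral_prod_range_comp_rademacher (n : ℕ) (g : ℕ → ℝ → ℝ) :
    ∫ t, ∏ j ∈ Finset.range n, g j (rademacher (j + 1) t) ∂unitVolume =
      ∏ j ∈ Finset.range n, (g j 1 + g j (-1)) / 2 := by
  induction n generalizing g with
  | zero => simp
  | succ n ih =>
    have hleft : ∫ s, ∏ j ∈ Finset.range (n + 1), g j (rademacher (j + 1) (s / 2)) ∂unitVolume =
        (∏ j ∈ Finset.range n, (g (j + 1) 1 + g (j + 1) (-1)) / 2) * g 0 1 := by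
      rw [← ih fun j => g (j + 1), ← integral_mul_const]
      refine integral_congr_ae (ae_unitVolume_mem_Ioo.mono fun s hs => ?_)
      simp only [Finset.prod_range_succ', rademacher_succ_half (_ + 1), zero_add,
        rademacher_one_half hs]
    have hright :
        ∫ s, ∏ j ∈ Finset.range (n + 1), g j (rademacher (j + 1) ((s + 1) / 2)) ∂unitVolume =
        (∏ j ∈ Finset.range n, (g (j + 1) 1 + g (j + 1) (-1)) / 2) * g 0 (-1) := by
      rw [← ih fun j => g (j + 1), ← integral_mul_const]
      refine integral_congr_ae (ae_unitVolume_mem_Ioo.mono fun s hs => ?_)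
      simp only [Finset.prod_range_succ', rademacher_succ_half (_ + 1), rademacher_succ_add_one,
        zero_add, rademacher_one_add_one_half hs]
    rw [integral_unitVolume_eq_add_halves (integrable_prod_comp_rademacher _ g), hleft, hright,
      Finset.prod_range_succ', smul_eq_mul]
    ring

lemma integral_prod_comp_rademacher (S : Finset ℕ) (g : ℕ → ℝ → ℝ) :
    ∫ t, ∏ j ∈ S, g j (rademacher (j + 1) t) ∂unitVolume = ∏ j ∈ S, (g j 1 + g j (-1)) / 2 := by
  have hS : S ⊆ Finset.range (S.sup id + 1) := fun j hj =>
    Finset.mem_range_succ_iff.2 (Finset.le_sup (f := id) hj)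
  have hprod (a : ℕ → ℝ) :
      ∏ j ∈ S, a j = ∏ j ∈ Finset.range (S.sup id + 1), if j ∈ S then a j else 1 := by
    rw [Finset.prod_ite_mem, Finset.inter_eq_right.2 hS]
  have h := integral_prod_range_comp_rademacher (S.sup id + 1) fun j x => if j ∈ S then g j x else 1
  simp only [hprod]
  rw [h]
  refine Finset.prod_congr rfl fun j _ => ?_
  split_ifs <;> norm_num

lemma integral_comp_rademacher (j : ℕ) (g : ℝ → ℝ) :
    ∫ t, g (rademacher (j + 1) t) ∂unitVolume = (g 1 + g (-1)) / 2 := by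
  simpa using integral_prod_comp_rademacher {j} fun _ => g

lemma integral_rademacher (j : ℕ) : ∫ t, rademacher (j + 1) t ∂unitVolume = 0 := by
  simpa using integral_comp_rademacher j id

lemma integral_rademacher_sq (j : ℕ) : ∫ t, rademacher (j + 1) t ^ 2 ∂unitVolume = 1 := by
  rw [integral_comp_rademacher j (· ^ 2)]
  norm_num

lemma measureReal_iInter_preimage_rademacher (S : Finset ℕ) (s : ℕ → Set ℝ) :
    unitVolume.real (⋂ j ∈ S, rademacher (j + 1) ⁻¹' s j) =
      ∏ j ∈ S, ((s j).indicator 1 1 + (s j).indicator 1 (-1)) / 2 := by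
  rw [← integral_prod_comp_rademacher S fun j => (s j).indicator 1,
    ← integral_indicator_one (S.measurableSet_biInter fun j _ =>
      measurableSet_preimage_rademacher (j + 1) (s j))]
  congr with t
  have hprod := prod_indicator_const_apply S (fun j => rademacher (j + 1) ⁻¹' s j) (1 : ℝ → ℝ) t
  rw [one_pow] at hprod
  exact hprod.symm

lemma measureReal_preimage_rademacher (j : ℕ) (s : Set ℝ) :
    unitVolume.real (rademacher (j + 1) ⁻¹' s) = (s.indicator 1 1 + s.indicator 1 (-1)) / 2 := by
  simpa using measureReal_iInter_preimage_rademacher {j} fun _ => s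

lemma iIndepFun_rademacher : iIndepFun (fun j => rademacher (j + 1)) unitVolume := by
  rw [iIndepFun_iff_measure_inter_preimage_eq_mul]
  intro S s _
  rw [← ENNReal.toReal_eq_toReal_iff' (by finiteness)
    (ENNReal.prod_ne_top fun _ _ => measure_ne_top _ _), ENNReal.toReal_prod]
  simp only [← measureReal_def, measureReal_iInter_preimage_rademacher,
    measureReal_preimage_rademacher]

lemma identDistrib_rademacher (i j : ℕ) :
    IdentDistrib (rademacher (i + 1)) (rademacher (j + 1)) unitVolume unitVolume where
  aemeasurable_fst := (measurable_rademacher _).aemeasurable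
  aemeasurable_snd := (measurable_rademacher _).aemeasurable
  map_eq := by
    ext s hs
    rw [Measure.map_apply (measurable_rademacher _) hs,
      Measure.map_apply (measurable_rademacher _) hs, ← measureReal_eq_measureReal_iff,
      measureReal_preimage_rademacher, measureReal_preimage_rademacher]

lemma hasSubgaussianMGF_rademacher (j : ℕ) :
    HasSubgaussianMGF (rademacher (j + 1)) 1 unitVolume := by
  have hmem (t : ℝ) : rademacher (j + 1) t ∈ Set.Icc (-1) 1 := by
    rcases rademacher_eq (j + 1) t with h | h | h <;> norm_num [h]
  have hoeffding := hasSubgaussianMGF_of_mem_Icc_of_integral_eq_zero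
    (measurable_rademacher (j + 1)).aemeasurable (.of_forall hmem) (integral_rademacher j)
  have hparam : (‖(1 : ℝ) - -1‖₊ / 2) ^ 2 = 1 := by
    ext
    norm_num
  rwa [hparam] at hoeffding

end Rademacher

section RademacherMean

/-- The sum of the first `N` Rademacher functions, normalized to variance one. -/
noncomputable def rademacherMean (N : ℕ) (t : ℝ) : ℝ :=
  (√N)⁻¹ * ∑ k ∈ Finset.range N, rademacher (k + 1) t

theorem tendsto_integral_abs_rademacherMean_rpow {r : ℝ} (hr : 0 ≤ r) :
    Tendsto (fun N => ∫ t, |rademacherMean N t| ^ r ∂unitVolume) atTop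
      (𝓝 (2 ^ (r / 2) * (Gamma ((r + 1) / 2) / √π))) := by
  have hgauss := integral_abs_rpow_gaussianReal (v := 1) (neg_one_lt_zero.trans_le hr) one_ne_zero
  rw [NNReal.coe_one, mul_one] at hgauss
  rw [← hgauss]
  exact tendsto_integral_abs_rpow_inv_sqrt_mul_sum hr (integral_rademacher 0)
    (integral_rademacher_sq 0) iIndepFun_rademacher (identDistrib_rademacher · 0)
    (hasSubgaussianMGF_rademacher 0)

lemma sum_prod_rademacher_eq_prod_rademacherMean {m N : ℕ} (t : Fin m → ℝ) :
    ∑ i : Fin m → Fin N, (∏ k, rademacher ((i k).1 + 1) (t k)) * ((N : ℝ) ^ (-(m : ℝ) / 2)) =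
      ∏ k, rademacherMean N (t k) := by
  have hscale : (N : ℝ) ^ (-(m : ℝ) / 2) = (√N)⁻¹ ^ m := by
    rw [sqrt_eq_rpow, ← rpow_neg N.cast_nonneg, ← rpow_mul_natCast N.cast_nonneg]
    congr 1
    ring
  calc ∑ i : Fin m → Fin N, (∏ k, rademacher ((i k).1 + 1) (t k)) * ((N : ℝ) ^ (-(m : ℝ) / 2))
      = (∏ k, ∑ i : Fin N, rademacher (i.1 + 1) (t k)) * (√N)⁻¹ ^ m := by
        rw [← Finset.sum_mul, hscale, Fintype.prod_sum]
    _ = ∏ k, rademacherMean N (t k) := by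
        simp only [rademacherMean, Finset.prod_mul_distrib, Finset.prod_const, Finset.card_univ,
          Fintype.card_fin, ← Fin.sum_univ_eq_sum_range (fun k => rademacher (k + 1) _), mul_comm]

lemma restrict_Icc_eq_pi_unitVolume (ι : Type*) [Fintype ι] :
    (volume : Measure (ι → ℝ)).restrict (Set.Icc 0 1) = Measure.pi fun _ => unitVolume := by
  rw [← Set.pi_univ_Icc, volume_pi, Measure.restrict_pi_pi]
  rfl

lemma setIntegral_abs_sum_prod_rademacher_rpow (r : ℝ) (m N : ℕ) :
    ∫ t : Fin m → ℝ in Set.Icc 0 1,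
      |∑ i : Fin m → Fin N,
        (∏ k, rademacher ((i k).1 + 1) (t k)) * ((N : ℝ) ^ (-(m : ℝ) / 2))| ^ r =
      (∫ t, |rademacherMean N t| ^ r ∂unitVolume) ^ m := by
  simp_rw [sum_prod_rademacher_eq_prod_rademacherMean, Finset.abs_prod,
    ← finsetProd_rpow _ _ fun _ _ => abs_nonneg _]
  rw [restrict_Icc_eq_pi_unitVolume, integral_fintype_prod_eq_pow fun x => |rademacherMean N x| ^ r,
    Fintype.card_fin]

end RademacherMean

theorem multiple_rademacher_clt_limit_general {r : ℝ} (hr0 : 0 < r) (m : ℕ) :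
    Tendsto (fun N : ℕ =>
        (∫ t : Fin m → ℝ in Set.Icc 0 1,
          |∑ i : Fin m → Fin N,
            (∏ k, rademacher ((i k).1 + 1) (t k)) * ((N : ℝ) ^ (-(m : ℝ) / 2))| ^ r) ^ (1 / r))
      atTop (𝓝 ((√2 * (Gamma ((r + 1) / 2) / √π) ^ (1 / r)) ^ m)) := by
  have hlim : √2 * (Gamma ((r + 1) / 2) / √π) ^ (1 / r) =
      (2 ^ (r / 2) * (Gamma ((r + 1) / 2) / √π)) ^ (1 / r) := by
    rw [mul_rpow (by positivity) (by positivity), ← rpow_mul zero_le_two, sqrt_eq_rpow]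
    field_simp
  rw [hlim]
  refine (((tendsto_integral_abs_rademacherMean_rpow hr0.le).rpow_const
    (Or.inr (by positivity))).pow m).congr fun N => ?_
  rw [setIntegral_abs_sum_prod_rademacher_rpow,
    rpow_pow_comm (integral_nonneg fun t => by positivity)]

/-- For the arrays `y^{(N)}_{i₁…i_m} = N^{-m/2}`, the `L_r` norms of the multiple Rademacher
sums converge to `(√2 (Γ((r+1)/2)/√π)^{1/r})^m`. -/
theorem multiple_rademacher_clt_limit (r : ℝ) (hr0 : 0 < r) (hr2 : r < 2)
    (m : ℕ) (hm : 1 ≤ m) :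
    Tendsto (fun N : ℕ =>
        (∫ t : Fin m → ℝ in Set.Icc 0 1,
          |∑ i : Fin m → Fin N,
            (∏ k, rademacher ((i k).1 + 1) (t k)) * ((N : ℝ) ^ (-(m : ℝ) / 2))| ^ r) ^ (1 / r))
      atTop
      (nhds ((Real.sqrt 2 * (Real.Gamma ((r + 1) / 2) / Real.sqrt Real.pi) ^ (1 / r)) ^ m)) :=
  multiple_rademacher_clt_limit_general hr0 m
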